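/- Let A be a Noetherian complete local ring and let B = A[[x_1, ..., x_n]] be a formal power series ring over A. Then contraction of primes induces a bijection between the minimal primes of B and the minimal primes of A, and this bijection preserves multiplicities: for a minimal prime q of B lying over the minimal prime p of A, length(B_q) = length(A_p). -/

import Mathlib

/-- The length of a ring as a module over itself, realized as the Krull dimension of
its lattice of ideals (submodules). -/
noncomputable def ringLength (R : Type*) [CommRing R] : WithBot ℕ∞ :=
  Order.krullDim (Submodule R R)

/-!
Write `B = A⟦σ⟧`. Finite generation of an ideal `I` of `A` gives `B ⧸ IB ≅ (A ⧸ I)⟦σ⟧`, so primes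
of `A` extend to primes of `B`, and the constant coefficient retracts `B` onto `A`, so every ideal
is the contraction of its extension. Hence the minimal primes of `B` are exactly the extensions of
the minimal primes of `A`.

As an `A`-module `B` is a power of `A`, hence flat. If `q = pB`, then `A_p → B_q` is a flat local
homomorphism whose closed fibre `B_q ⧸ p B_q` is the residue field of `B_q`, and such a
homomorphism preserves lengths.
-/

open TensorProduct

section MinimalPrimes

variable {R S : Type*} [CommSemiring R] [CommSemiring S]

theorem ideal_comap_map_of_comp_eq_id {f : R →+* S} {g : S →+* R} (h : g.comp f = RingHom.id R)
    (I : Ideal R) : (I.map f).comap f = I := by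
  refine le_antisymm ?_ Ideal.le_comap_map
  calc (I.map f).comap f ≤ ((I.map f).map g).comap (g.comp f) :=
        Ideal.comap_mono Ideal.le_comap_map
    _ = I := by rw [Ideal.map_map, h, Ideal.map_id, Ideal.comap_id]

variable {f : R →+* S} (hprime : ∀ p ∈ minimalPrimes R, (p.map f).IsPrime)

include hprime

theorem exists_map_eq_of_mem_minimalPrimes {q : Ideal S} (hq : q ∈ minimalPrimes S) :
    ∃ p ∈ minimalPrimes R, p.map f = q := by
  have : q.IsPrime := hq.1.1
  obtain ⟨p, hp, hpq⟩ := Ideal.exists_minimalPrimes_le (bot_le : ⊥ ≤ q.comap f)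
  have hle : p.map f ≤ q := Ideal.map_le_iff_le_comap.mpr hpq
  exact ⟨p, hp, le_antisymm hle (hq.2 ⟨hprime p hp, bot_le⟩ hle)⟩

theorem map_comap_of_mem_minimalPrimes {q : Ideal S} (hq : q ∈ minimalPrimes S) :
    (q.comap f).map f = q := by
  obtain ⟨p, -, rfl⟩ := exists_map_eq_of_mem_minimalPrimes hprime hq
  exact Ideal.map_comap_map f p

theorem bijOn_comap_minimalPrimes (hcomap : ∀ p ∈ minimalPrimes R, (p.map f).comap f = p) :
    Set.BijOn (Ideal.comap f) (minimalPrimes S) (minimalPrimes R) := by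
  have hinv : Set.InvOn (Ideal.map f) (Ideal.comap f) (minimalPrimes S) (minimalPrimes R) :=
    ⟨fun _ ↦ map_comap_of_mem_minimalPrimes hprime, hcomap⟩
  refine hinv.bijOn (fun q hq ↦ ?_) (fun p hp ↦ ?_)
  · obtain ⟨p, hp, rfl⟩ := exists_map_eq_of_mem_minimalPrimes hprime hq
    rwa [hcomap p hp]
  · refine ⟨⟨hprime p hp, bot_le⟩, fun q hq hqp ↦ Ideal.map_le_iff_le_comap.mpr ?_⟩
    have : q.IsPrime := hq.1
    exact hp.2 ⟨inferInstance, bot_le⟩ ((Ideal.comap_mono hqp).trans_eq (hcomap p hp))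

end MinimalPrimes

section Flat

variable {R : Type*} [CommRing R]

theorem exists_eq_sum_smul_of_ker_le_span {M ι κ : Type*} [AddCommGroup M] [Module R M]
    [Module.Flat R M] [Fintype ι] [Fintype κ] {f : ι → R} {g : κ → ι → R}
    (hg : (Fintype.linearCombination R f).ker ≤ Submodule.span R (Set.range g))
    {x : ι → M} (hx : ∑ i, f i • x i = 0) : ∃ y : κ → M, ∀ i, x i = ∑ j, g j i • y j := by
  obtain ⟨l, a, z, hxz, ha⟩ := Module.Flat.isTrivialRelation_of_sum_smul_eq_zero hx
  have hmem (m : Fin l) : (a · m) ∈ Submodule.span R (Set.range g) := by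
    refine hg ?_
    rw [LinearMap.mem_ker, Fintype.linearCombination_apply, ← ha m]
    simp only [smul_eq_mul, mul_comm]
  choose c hc using fun m ↦ (Submodule.mem_span_range_iff_exists_fun R).mp (hmem m)
  refine ⟨fun j ↦ ∑ m, c m j • z m, fun i ↦ ?_⟩
  calc x i = ∑ m, (∑ j, c m j * g j i) • z m := by
        rw [hxz i]
        refine Finset.sum_congr rfl fun m _ ↦ ?_
        simpa using congrArg (· • z m) (congrFun (hc m) i).symm
    _ = ∑ j, g j i • ∑ m, c m j • z m := by
        simp only [Finset.sum_smul, Finset.smul_sum, smul_smul, mul_comm]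
        exact Finset.sum_comm

theorem flat_pi_of_isNoetherianRing [IsNoetherianRing R] {ι : Type*} {M : ι → Type*}
    [∀ i, AddCommGroup (M i)] [∀ i, Module R (M i)] [∀ i, Module.Flat R (M i)] :
    Module.Flat R (∀ i, M i) := by
  -- The syzygies of the coefficients of a relation are finitely generated, so the relation can be
  -- trivialized with the same matrix in every factor.
  refine Module.Flat.of_forall_isTrivialRelation fun {l f x} hx ↦ ?_
  obtain ⟨k, g, hg⟩ := Submodule.fg_iff_exists_fin_generating_family.mp
    (IsNoetherian.noetherian (Fintype.linearCombination R f).ker)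
  have hfactor (i : ι) : ∑ s, f s • x s i = 0 := by simpa using congrFun hx i
  choose y hy using fun i ↦ exists_eq_sum_smul_of_ker_le_span hg.ge (hfactor i)
  refine ⟨k, fun s j ↦ g j s, fun j i ↦ y i j, fun s ↦ ?_, fun j ↦ ?_⟩
  · ext i
    simpa using hy i s
  · have hj : g j ∈ (Fintype.linearCombination R f).ker :=
      hg ▸ Submodule.subset_span (Set.mem_range_self j)
    simpa [Fintype.linearCombination_apply, mul_comm] using hj

end Flat

section PowerSeries

variable {σ A : Type*}

section Semiring

variable [CommSemiring A]

theorem mvPowerSeries_comap_map_algebraMap (I : Ideal A) :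
    (I.map (algebraMap A (MvPowerSeries σ A))).comap (algebraMap A (MvPowerSeries σ A)) = I :=
  ideal_comap_map_of_comp_eq_id MvPowerSeries.constantCoeff_comp_C I

theorem mvPowerSeries_mem_map_algebraMap_of_fg {I : Ideal A} (hI : I.FG) {f : MvPowerSeries σ A}
    (hf : ∀ d, MvPowerSeries.coeff d f ∈ I) : f ∈ I.map (algebraMap A (MvPowerSeries σ A)) := by
  obtain ⟨k, g, rfl⟩ := Submodule.fg_iff_exists_fin_generating_family.mp hI
  choose c hc using fun d ↦ (Submodule.mem_span_range_iff_exists_fun A).mp (hf d)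
  let F (i : Fin k) : MvPowerSeries σ A := fun d ↦ c d i
  have hsum : f = ∑ i, F i * algebraMap A (MvPowerSeries σ A) (g i) := by
    ext d
    rw [map_sum, ← hc d]
    exact Finset.sum_congr rfl fun i _ ↦ (MvPowerSeries.coeff_mul_C d (F i) (g i)).symm
  rw [hsum]
  exact Ideal.sum_mem _ fun i _ ↦ Ideal.mul_mem_left _ _ <|
    Ideal.mem_map_of_mem _ <| Submodule.subset_span (Set.mem_range_self i)

end Semiring

section Ring

variable [CommRing A]

theorem mvPowerSeries_flat_of_isNoetherianRing [IsNoetherianRing A] :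
    Module.Flat A (MvPowerSeries σ A) :=
  flat_pi_of_isNoetherianRing

theorem mvPowerSeries_ker_map_quotientMk_of_fg {I : Ideal A} (hI : I.FG) :
    RingHom.ker (MvPowerSeries.map (σ := σ) (Ideal.Quotient.mk I)) =
      I.map (algebraMap A (MvPowerSeries σ A)) := by
  refine le_antisymm (fun f hf ↦ mvPowerSeries_mem_map_algebraMap_of_fg hI fun d ↦ ?_) ?_
  · rw [← Ideal.Quotient.eq_zero_iff_mem, ← MvPowerSeries.coeff_map, RingHom.mem_ker.mp hf,
      map_zero]
  · refine Ideal.map_le_iff_le_comap.mpr fun a ha ↦ ?_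
    rw [Ideal.mem_comap, RingHom.mem_ker, ← MvPowerSeries.c_eq_algebraMap, MvPowerSeries.map_C,
      Ideal.Quotient.eq_zero_iff_mem.mpr ha, map_zero]

theorem mvPowerSeries_isPrime_map_algebraMap_of_fg {p : Ideal A} [p.IsPrime] (hp : p.FG) :
    (p.map (algebraMap A (MvPowerSeries σ A))).IsPrime := by
  rw [← mvPowerSeries_ker_map_quotientMk_of_fg hp]
  have : IsDomain (MvPowerSeries σ (A ⧸ p)) := NoZeroDivisors.to_isDomain _
  exact RingHom.ker_isPrime _

end Ring

end PowerSeries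

section Length

theorem ringLength_eq_length (R : Type*) [CommRing R] : ringLength R = Module.length R R :=
  (Module.coe_length R R).symm

theorem length_baseChange_eq_of_map_maximalIdeal_eq {R S M : Type*} [CommRing R] [CommRing S]
    [IsLocalRing R] [IsLocalRing S] [Algebra R S] [IsLocalHom (algebraMap R S)] [Module.Flat R S]
    [AddCommGroup M] [Module R M]
    (h : (IsLocalRing.maximalIdeal R).map (algebraMap R S) = IsLocalRing.maximalIdeal S) :
    Module.length S (S ⊗[R] M) = Module.length R M := by
  have : IsSimpleModule S (S ⧸ IsLocalRing.maximalIdeal S) :=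
    isSimpleModule_iff_quot_maximal.mpr ⟨_, inferInstance, ⟨LinearEquiv.refl S _⟩⟩
  rw [IsLocalRing.length_baseChange R S M, h,
    Module.length_eq_one S (S ⧸ IsLocalRing.maximalIdeal S), mul_one]

theorem length_localization_atPrime_eq_of_map_eq {A B : Type*} [CommRing A] [CommRing B]
    [Algebra A B] [Module.Flat A B] (p : Ideal A) [p.IsPrime] (q : Ideal B) [q.IsPrime]
    [q.LiesOver p] (h : p.map (algebraMap A B) = q) :
    Module.length (Localization.AtPrime q) (Localization.AtPrime q) =
      Module.length (Localization.AtPrime p) (Localization.AtPrime p) := by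
  let := Localization.AtPrime.algebraOfLiesOver p q
  have : IsLocalHom (algebraMap (Localization.AtPrime p) (Localization.AtPrime q)) := by
    rw [RingHom.algebraMap_toAlgebra]
    exact Localization.isLocalHom_localRingHom p q (algebraMap A B) Ideal.LiesOver.over
  have hmax : (IsLocalRing.maximalIdeal (Localization.AtPrime p)).map
      (algebraMap (Localization.AtPrime p) (Localization.AtPrime q)) =
        IsLocalRing.maximalIdeal (Localization.AtPrime q) := by
    rw [← Localization.AtPrime.map_eq_maximalIdeal, ← Localization.AtPrime.map_eq_maximalIdeal,
      Ideal.map_map, ← IsScalarTower.algebraMap_eq, IsScalarTower.algebraMap_eq A B,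
      ← Ideal.map_map, h]
  rw [← length_baseChange_eq_of_map_maximalIdeal_eq hmax,
    (AlgebraTensorModule.rid _ (Localization.AtPrime q) (Localization.AtPrime q)).length_eq]

end Length

theorem minimalPrimes_powerSeries_bijOn_general (A : Type*) [CommRing A] [IsNoetherianRing A]
    (σ : Type*) :
    Set.BijOn (fun q : Ideal (MvPowerSeries σ A) =>
        q.comap (algebraMap A (MvPowerSeries σ A)))
      (minimalPrimes (MvPowerSeries σ A)) (minimalPrimes A) ∧
    ∀ (q : Ideal (MvPowerSeries σ A)) [q.IsPrime],
      q ∈ minimalPrimes (MvPowerSeries σ A) →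
      ringLength (Localization.AtPrime q) =
        ringLength (Localization.AtPrime
          (q.comap (algebraMap A (MvPowerSeries σ A)))) := by
  have hprime (p : Ideal A) (hp : p ∈ minimalPrimes A) :
      (p.map (algebraMap A (MvPowerSeries σ A))).IsPrime :=
    have : p.IsPrime := hp.1.1
    mvPowerSeries_isPrime_map_algebraMap_of_fg p.fg_of_isNoetherianRing
  refine ⟨bijOn_comap_minimalPrimes hprime fun p _ ↦ mvPowerSeries_comap_map_algebraMap p,
    fun q _ hq ↦ ?_⟩
  have : Module.Flat A (MvPowerSeries σ A) := mvPowerSeries_flat_of_isNoetherianRing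
  have : q.LiesOver (q.comap (algebraMap A (MvPowerSeries σ A))) := ⟨rfl⟩
  rw [ringLength_eq_length, ringLength_eq_length,
    length_localization_atPrime_eq_of_map_eq _ q (map_comap_of_mem_minimalPrimes hprime hq)]

theorem minimalPrimes_powerSeries_bijOn (A : Type u) [CommRing A] [IsLocalRing A]
    [IsNoetherianRing A] [IsAdicComplete (IsLocalRing.maximalIdeal A) A] (n : ℕ) :
    Set.BijOn (fun q : Ideal (MvPowerSeries (Fin n) A) =>
        q.comap (algebraMap A (MvPowerSeries (Fin n) A)))
      (minimalPrimes (MvPowerSeries (Fin n) A)) (minimalPrimes A) ∧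
    ∀ (q : Ideal (MvPowerSeries (Fin n) A)) [q.IsPrime],
      q ∈ minimalPrimes (MvPowerSeries (Fin n) A) →
      ringLength (Localization.AtPrime q) =
        ringLength (Localization.AtPrime
          (q.comap (algebraMap A (MvPowerSeries (Fin n) A)))) :=
  minimalPrimes_powerSeries_bijOn_general A (Fin n)
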